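/- For all sufficiently large N the following holds. Let A ⊆ [N] be a nonempty set with no non-zero square differences, let α = |A|/N, and let g = 1_A − α·1_{[N]}. Define W : ℤ → ℝ by W(n) = 2m/N^{1/2} if n = m² for some positive integer m with m² ≤ N, and W(n) = 0 otherwise. Then ∫₀¹ |ĝ(γ)| · |1̂_A(γ)| · |Ŵ(γ)| dγ ≥ (1/8)·α·|A|·N^{1/2}. -/

import Mathlib

/-- `A` has no non-zero square differences. -/
def NoSquareDiff (A : Finset ℕ) : Prop :=
  ∀ a ∈ A, ∀ b ∈ A, ∀ n : ℕ, 0 < n → a ≠ b + n ^ 2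

/-- `e(x) = e^{2πix}`. -/
noncomputable def eu (x : ℝ) : ℂ := Complex.exp (2 * Real.pi * Complex.I * x)

/-- The Fourier transform of the indicator of `A`: `1̂_A(γ) = ∑_{a ∈ A} e(aγ)`. -/
noncomputable def hatInd (A : Finset ℕ) (γ : ℝ) : ℂ := ∑ a ∈ A, eu (a * γ)

/-- The Fourier transform `Ŵ(γ) = ∑_n W(n) e(nγ)` of the weight
`W(n) = 2m/√N` if `n = m² ≤ N` (`m ≥ 1`), `W(n) = 0` otherwise. -/
noncomputable def hatW (N : ℕ) (γ : ℝ) : ℂ :=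
  ∑ m ∈ Finset.Icc 1 (Nat.sqrt N), ((2 * (m : ℝ) / Real.sqrt N : ℝ) : ℂ) * eu ((m : ℝ) ^ 2 * γ)

/-!
Integrate `ĝ` against `conj 1̂_A * (Ŵ + conj Ŵ)`, whose modulus is at most `2 |1̂_A| |Ŵ|`. By
orthogonality, the integral of `ĝ * conj 1̂_A * e(±m²γ)` is the number of pairs in `A × A` with
difference `±m²`, which is zero, minus `α` times the number of such pairs in `A × [N]`. Taking both
signs together avoids any boundary loss: once `2m² ≤ N`, every `a ∈ A` has `a - m²` or `a + m²` in
`[N]`, so `m` contributes at least `|α| |A|` times its weight. With `s = ⌊√(N/2)⌋`, these `m` have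
total weight `s(s + 1)/√N ≥ √N/4`.
-/

open scoped ComplexConjugate Finset

theorem eu_add (x y : ℝ) : eu (x + y) = eu x * eu y := by
  simp only [eu, ← Complex.exp_add]
  congr 1
  push_cast
  ring

theorem conj_eu (x : ℝ) : conj (eu x) = eu (-x) := by
  simp [eu, ← Complex.exp_conj, Complex.conj_ofNat]

@[fun_prop]
theorem continuous_eu : Continuous eu := by
  unfold eu
  fun_prop

theorem integral_eu_int_mul (k : ℤ) :
    ∫ γ in (0 : ℝ)..1, eu (k * γ) = if k = 0 then 1 else 0 := by
  split_ifs with hk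
  · simp [hk, eu]
  · have hc : (2 * Real.pi * Complex.I * k : ℂ) ≠ 0 := by
      simp [Real.pi_ne_zero, Complex.I_ne_zero, hk]
    have hexp (γ : ℝ) : eu (k * γ) = Complex.exp (2 * Real.pi * Complex.I * k * γ) := by
      simp only [eu, Complex.ofReal_mul, Complex.ofReal_intCast, mul_assoc]
    have hperiod : Complex.exp (2 * Real.pi * Complex.I * k) = 1 :=
      Complex.exp_eq_one_iff.2 ⟨k, by ring⟩
    simp [hexp, integral_exp_mul_complex hc, hperiod]

/-- The number of representations `k = x - y` with `x ∈ X` and `y ∈ Y`: the cross-correlation of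
the indicators of `X` and `Y`, with the difference taken in `ℤ`. -/
def diffCount (X Y : Finset ℕ) (k : ℤ) : ℕ := #{p ∈ X ×ˢ Y | (p.1 : ℤ) - p.2 = k}

theorem card_le_diffCount_add_diffCount_neg {N k : ℕ} (hk : 2 * k ≤ N) {A : Finset ℕ}
    (hA : A ⊆ Finset.Icc 1 N) :
    #A ≤ diffCount A (Finset.Icc 1 N) k + diffCount A (Finset.Icc 1 N) (-k) := by
  let pairs (d : ℤ) : Finset (ℕ × ℕ) := {p ∈ A ×ˢ Finset.Icc 1 N | (p.1 : ℤ) - p.2 = d}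
  have hcover : A ⊆ (pairs k ∪ pairs (-k)).image Prod.fst := by
    intro a ha
    obtain ⟨ha_pos, ha_le⟩ := Finset.mem_Icc.1 (hA ha)
    simp only [pairs, Finset.mem_image, Finset.mem_union, Finset.mem_filter, Finset.mem_product,
      Finset.mem_Icc]
    rcases lt_or_ge k a with hka | hak
    · exact ⟨(a, a - k), .inl ⟨⟨ha, by omega⟩, by grind⟩, rfl⟩
    · exact ⟨(a, a + k), .inr ⟨⟨ha, by omega⟩, by grind⟩, rfl⟩
  exact (Finset.card_le_card hcover).trans (Finset.card_image_le.trans (Finset.card_union_le _ _))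

@[fun_prop]
theorem continuous_hatInd (A : Finset ℕ) : Continuous (hatInd A) := by
  unfold hatInd
  fun_prop

@[fun_prop]
theorem continuous_hatW (N : ℕ) : Continuous (hatW N) := by
  unfold hatW
  fun_prop

theorem integral_conj_hatInd_mul_hatInd_mul_eu (X Y : Finset ℕ) (k : ℤ) :
    ∫ γ in (0 : ℝ)..1, conj (hatInd X γ) * hatInd Y γ * eu (k * γ) = diffCount X Y k := by
  have hexpand (γ : ℝ) : conj (hatInd X γ) * hatInd Y γ * eu (k * γ) =
      ∑ p ∈ X ×ˢ Y, eu ((k - (p.1 - p.2) : ℤ) * γ) := by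
    rw [hatInd, hatInd, map_sum, Finset.sum_mul_sum, ← Finset.sum_product', Finset.sum_mul]
    simp only [conj_eu, ← eu_add]
    refine Finset.sum_congr rfl fun p _ => congrArg eu ?_
    push_cast
    ring
  simp only [hexpand]
  rw [intervalIntegral.integral_finsetSum fun p _ =>
    Continuous.intervalIntegrable (by fun_prop) _ _]
  simp only [integral_eu_int_mul, sub_eq_zero, eq_comm (a := k), Finset.sum_boole, diffCount]

theorem integral_conj_hatInd_mul_sub_mul_eu (A B : Finset ℕ) (α : ℂ) (k : ℤ) :
    ∫ γ in (0 : ℝ)..1, conj (hatInd A γ) * (hatInd A γ - α * hatInd B γ) * eu (k * γ) =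
      diffCount A A k - α * diffCount A B k := by
  have hsplit (γ : ℝ) : conj (hatInd A γ) * (hatInd A γ - α * hatInd B γ) * eu (k * γ) =
      conj (hatInd A γ) * hatInd A γ * eu (k * γ) -
        α * (conj (hatInd A γ) * hatInd B γ * eu (k * γ)) := by ring
  simp only [hsplit]
  rw [intervalIntegral.integral_sub (Continuous.intervalIntegrable (by fun_prop) _ _)
    (Continuous.intervalIntegrable (by fun_prop) _ _), intervalIntegral.integral_const_mul,
    integral_conj_hatInd_mul_hatInd_mul_eu, integral_conj_hatInd_mul_hatInd_mul_eu]

theorem hatW_add_conj_hatW (N : ℕ) (γ : ℝ) :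
    hatW N γ + conj (hatW N γ) = ∑ m ∈ Finset.Icc 1 N.sqrt,
      ((2 * m / √N : ℝ) : ℂ) * (eu ((m ^ 2 : ℤ) * γ) + eu ((-m ^ 2 : ℤ) * γ)) := by
  simp only [hatW, map_sum, map_mul, Complex.conj_ofReal, conj_eu, ← Finset.sum_add_distrib,
    ← mul_add]
  push_cast
  simp only [neg_mul]

namespace NoSquareDiff

variable {A : Finset ℕ}

theorem diffCount_sq_eq_zero (hA : NoSquareDiff A) {m : ℕ} (hm : 0 < m) :
    diffCount A A (m ^ 2) = 0 := by
  refine Finset.card_filter_eq_zero_iff.2 fun p hp hdiff => ?_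
  obtain ⟨ha, hb⟩ := Finset.mem_product.1 hp
  exact hA _ ha _ hb m hm (by zify; linarith)

theorem diffCount_neg_sq_eq_zero (hA : NoSquareDiff A) {m : ℕ} (hm : 0 < m) :
    diffCount A A (-m ^ 2) = 0 := by
  refine Finset.card_filter_eq_zero_iff.2 fun p hp hdiff => ?_
  obtain ⟨ha, hb⟩ := Finset.mem_product.1 hp
  exact hA _ hb _ ha m hm (by zify; linarith)

theorem integral_conj_hatInd_mul_sub_mul_hatW_add_conj (hA : NoSquareDiff A) (B : Finset ℕ)
    (α : ℂ) (N : ℕ) :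
    ∫ γ in (0 : ℝ)..1, conj (hatInd A γ) * (hatInd A γ - α * hatInd B γ) *
        (hatW N γ + conj (hatW N γ)) =
      -α * (∑ m ∈ Finset.Icc 1 N.sqrt,
        2 * m / √N * (diffCount A B (m ^ 2) + diffCount A B (-m ^ 2)) : ℝ) := by
  simp only [hatW_add_conj_hatW, Finset.mul_sum, mul_left_comm _ (Complex.ofReal _), mul_add]
  rw [intervalIntegral.integral_finsetSum fun m _ =>
    Continuous.intervalIntegrable (by fun_prop) _ _, Complex.ofReal_sum, Finset.mul_sum]
  refine Finset.sum_congr rfl fun m hm => ?_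
  have hm_pos : 0 < m := (Finset.mem_Icc.1 hm).1
  rw [intervalIntegral.integral_add (Continuous.intervalIntegrable (by fun_prop) _ _)
    (Continuous.intervalIntegrable (by fun_prop) _ _), intervalIntegral.integral_const_mul,
    intervalIntegral.integral_const_mul, integral_conj_hatInd_mul_sub_mul_eu,
    integral_conj_hatInd_mul_sub_mul_eu, hA.diffCount_sq_eq_zero hm_pos,
    hA.diffCount_neg_sq_eq_zero hm_pos]
  push_cast
  ring

theorem norm_mul_sum_diffCount_le_integral (hA : NoSquareDiff A) (B : Finset ℕ) (α : ℂ) (N : ℕ) :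
    ‖α‖ * ∑ m ∈ Finset.Icc 1 N.sqrt,
        2 * m / √N * (diffCount A B (m ^ 2) + diffCount A B (-m ^ 2)) ≤
      2 * ∫ γ in (0 : ℝ)..1,
        ‖hatInd A γ - α * hatInd B γ‖ * ‖hatInd A γ‖ * ‖hatW N γ‖ := by
  have hpointwise (γ : ℝ) : ‖conj (hatInd A γ) * (hatInd A γ - α * hatInd B γ) *
      (hatW N γ + conj (hatW N γ))‖ ≤
        2 * (‖hatInd A γ - α * hatInd B γ‖ * ‖hatInd A γ‖ * ‖hatW N γ‖) := by
    have hW : ‖hatW N γ + conj (hatW N γ)‖ ≤ 2 * ‖hatW N γ‖ :=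
      (norm_add_le _ _).trans_eq (by rw [RCLike.norm_conj, two_mul])
    rw [norm_mul, norm_mul, RCLike.norm_conj]
    exact (mul_le_mul_of_nonneg_left hW (by positivity)).trans_eq (by ring)
  rw [← intervalIntegral.integral_const_mul]
  refine le_trans ?_ (intervalIntegral.norm_integral_le_of_norm_le zero_le_one
    (.of_forall fun γ _ => hpointwise γ) (Continuous.intervalIntegrable (by fun_prop) _ _))
  rw [hA.integral_conj_hatInd_mul_sub_mul_hatW_add_conj, norm_mul, norm_neg, Complex.norm_real]
  exact mul_le_mul_of_nonneg_left (le_abs_self _) (norm_nonneg α)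

end NoSquareDiff

theorem sum_Icc_two_mul (s : ℕ) : ∑ m ∈ Finset.Icc 1 s, 2 * m = s * (s + 1) := by
  induction s with
  | zero => simp
  | succ s ih =>
    rw [Finset.sum_Icc_succ_top (by omega), ih]
    ring

theorem le_four_mul_sqrt_half_mul_add_one {N : ℕ} (hN : 2 ≤ N) :
    N ≤ 4 * ((N / 2).sqrt * ((N / 2).sqrt + 1)) := by
  have hhalf : N / 2 ≤ (N / 2).sqrt * (N / 2).sqrt + (N / 2).sqrt + (N / 2).sqrt :=
    Nat.sqrt_le_add _
  have hpos : 1 ≤ (N / 2).sqrt * (N / 2).sqrt :=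
    Nat.mul_pos (Nat.sqrt_pos.2 (by omega)) (Nat.sqrt_pos.2 (by omega))
  rw [mul_add_one]
  omega

theorem sqrt_div_four_le_sum_weight {N : ℕ} (hN : 2 ≤ N) :
    √N / 4 ≤ ∑ m ∈ Finset.Icc 1 (N / 2).sqrt, 2 * (m : ℝ) / √N := by
  have hsum : (N : ℝ) ≤ 4 * ∑ m ∈ Finset.Icc 1 (N / 2).sqrt, 2 * (m : ℝ) := by
    exact_mod_cast (sum_Icc_two_mul _).symm ▸ le_four_mul_sqrt_half_mul_add_one hN
  have hN_pos : 0 < √(N : ℝ) := Real.sqrt_pos.2 (by positivity)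
  rw [← Finset.sum_div, le_div_iff₀ hN_pos, div_mul_eq_mul_div, Real.mul_self_sqrt N.cast_nonneg]
  linarith

theorem card_mul_sqrt_div_four_le_sum_diffCount {N : ℕ} (hN : 2 ≤ N) {A : Finset ℕ}
    (hA : A ⊆ Finset.Icc 1 N) :
    #A * (√N / 4) ≤ ∑ m ∈ Finset.Icc 1 N.sqrt, 2 * m / √N *
      (diffCount A (Finset.Icc 1 N) (m ^ 2) + diffCount A (Finset.Icc 1 N) (-m ^ 2) : ℝ) := by
  calc #A * (√N / 4)
      ≤ #A * ∑ m ∈ Finset.Icc 1 (N / 2).sqrt, 2 * (m : ℝ) / √N := by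
        gcongr
        exact sqrt_div_four_le_sum_weight hN
    _ = ∑ m ∈ Finset.Icc 1 (N / 2).sqrt, 2 * (m : ℝ) / √N * #A := by
        rw [mul_comm, Finset.sum_mul]
    _ ≤ ∑ m ∈ Finset.Icc 1 (N / 2).sqrt, 2 * m / √N *
          (diffCount A (Finset.Icc 1 N) (m ^ 2) + diffCount A (Finset.Icc 1 N) (-m ^ 2) : ℝ) := by
        gcongr with m hm
        have hm_sq : 2 * m ^ 2 ≤ N := by
          have hm_sq_half : m ^ 2 ≤ N / 2 := Nat.le_sqrt'.1 (Finset.mem_Icc.1 hm).2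
          omega
        exact_mod_cast card_le_diffCount_add_diffCount_neg hm_sq hA
    _ ≤ _ := by
        gcongr
        exact Nat.div_le_self N 2

theorem statement_14_general {N : ℕ} (hN : 2 ≤ N) {A : Finset ℕ} (hAN : A ⊆ Finset.Icc 1 N)
    (hA : NoSquareDiff A) (α : ℂ) :
    (1 / 8) * ‖α‖ * #A * √N ≤ ∫ γ in (0 : ℝ)..1,
      ‖hatInd A γ - α * hatInd (Finset.Icc 1 N) γ‖ * ‖hatInd A γ‖ * ‖hatW N γ‖ := by
  have hupper := hA.norm_mul_sum_diffCount_le_integral (Finset.Icc 1 N) α N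
  have hlower := mul_le_mul_of_nonneg_left (card_mul_sqrt_div_four_le_sum_diffCount hN hAN)
    (norm_nonneg α)
  linarith

theorem statement_14 :
    ∃ N₀ : ℕ, ∀ N : ℕ, N₀ ≤ N →
      ∀ A : Finset ℕ, A.Nonempty → A ⊆ Finset.Icc 1 N → NoSquareDiff A →
      ∀ α : ℝ, α = (A.card : ℝ) / N →
        (1 / 8) * α * A.card * Real.sqrt N ≤
          ∫ γ in (0 : ℝ)..1,
            ‖hatInd A γ - (α : ℂ) * hatInd (Finset.Icc 1 N) γ‖ * ‖hatInd A γ‖ * ‖hatW N γ‖ := by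
  refine ⟨2, fun N hN A _ hAN hA α _ => le_trans ?_ (statement_14_general hN hAN hA α)⟩
  gcongr
  simpa using le_abs_self α
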